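/- Let q ∈ MvPolynomial (Fin n) (ZMod 2) be a quadratic form. Let e ∈ ℕ, let s be a finite set of natural numbers, and let f : ℕ → ℕ. Then q^e · (∏_{i ∈ s} (D_i q)^(f i)) · (q·(D₀ q) + D₁ q) · (q²·(D₁ q) + (D₀ q)³ + q³·(D₀ q)) = 0 if and only if either there exist linear forms a, b with q = a² + a·b + b², or there exist linear forms a, b with q = a·b. (This computes the kernel of the operation α·d₂·h₂ with d₂ = ι₂·Q₀(ι₂) + Q₁(ι₂), h₂ = ι₂²·Q₁(ι₂) + Q₀(ι₂)³ + ι₂³·Q₀(ι₂) and α any monomial: since the polynomial ring is an integral domain, the kernel is the union of the subfunctors generated by u² + uv + v² and by uv, corresponding to the fiber product algebra M₂ of D(2) and H₂.) -/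

import Mathlib

/-!
The ring `F₂[x₁,…,xₙ]` is a domain, so the product vanishes iff one of its factors does. Every
factor is analysed by applying the partial derivatives `∂_k`. They commute with each `D_i`, since
`D_i (x_j)` is a square, and `D_i l = l ^ 2 ^ (i + 1)` for a linear form `l`; hence
`∂_k (D_i q) = (∂_k q) ^ 2 ^ (i + 1)` for a quadratic form `q` (`pderiv_milnorQ`).

If all `∂_k q` vanish, then `q` is the square of a linear form (`exists_sq_of_pderiv_eq_zero`);
by the formula above, this happens as soon as `q` or some `D_i q` is zero. Otherwise some mixed
second derivative of `q` is `1` (`exists_pderiv_pderiv_eq_one`), say `∂_j u = 1` with `u = ∂_k q`;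
put `v = ∂_j q`.

* If `q D₀q + D₁q = 0`, applying `∂_k` and cancelling `u` gives `D₀q + q u = u³`; applying `∂_j`
  to this gives `q = u² + u v + v²` (`eq_of_d2_eq_zero`).
* If `q² D₁q + (D₀q)³ + q³ D₀q = 0`, the same two steps give
  `(D₀q)² = q² (q + u² + u v + v²)`. The ring is integrally closed, so `D₀q = q l` with
  `l² = q + u² + u v + v²`. With `a = l + u + v` this says `q = a² + u v`, and comparing
  `D₀q = u v (u + v)` with `q l` gives `a (a + u) (a + v) = 0`. Hence `q` is one of
  `u v`, `u (u + v)`, `v (u + v)` (`eq_mul_of_h2_eq_zero`).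
-/

open MvPolynomial

/-- The Milnor operation `Q_i` acting on `F₂[x₁,…,xₙ]` as the `F₂`-linear derivation
with `D_i (x_j) = x_j ^ (2^(i+1))`. -/
noncomputable def milnorQ (n i : ℕ) :
    Derivation (ZMod 2) (MvPolynomial (Fin n) (ZMod 2)) (MvPolynomial (Fin n) (ZMod 2)) :=
  MvPolynomial.mkDerivation (ZMod 2) fun j => X j ^ 2 ^ (i + 1)

/-- Derivations of a polynomial ring commute as soon as they commute on the variables, because
their commutator is a derivation. -/
lemma derivation_comm {n : ℕ}
    (D E : Derivation (ZMod 2) (MvPolynomial (Fin n) (ZMod 2)) (MvPolynomial (Fin n) (ZMod 2)))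
    (h : ∀ j, D (E (X j)) = E (D (X j))) (p : MvPolynomial (Fin n) (ZMod 2)) :
    D (E p) = E (D p) := by
  have h0 : ⁅D, E⁆ = 0 := by
    refine MvPolynomial.derivation_ext fun j => ?_
    rw [Derivation.commutator_apply, h j, sub_self, Derivation.zero_apply]
  have h1 := Derivation.commutator_apply (D1 := D) (D2 := E) p
  rw [h0, Derivation.zero_apply] at h1
  exact (sub_eq_zero.mp h1.symm)

lemma two_eq_zero_mvPolynomial {n : ℕ} : (2 : MvPolynomial (Fin n) (ZMod 2)) = 0 :=
  CharTwo.two_eq_zero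

lemma milnorQ_X {n : ℕ} (i : ℕ) (j : Fin n) : milnorQ n i (X j) = X j ^ 2 ^ (i + 1) :=
  mkDerivation_X _ _ _

lemma pderiv_milnorQ_comm {n : ℕ} (i : ℕ) (k : Fin n) (p : MvPolynomial (Fin n) (ZMod 2)) :
    pderiv k (milnorQ n i p) = milnorQ n i (pderiv k p) := by
  refine derivation_comm _ _ (fun j => ?_) p
  classical
  rw [milnorQ_X, pderiv_pow, pderiv_X, Pi.single_apply, pow_succ]
  push_cast
  rw [two_eq_zero_mvPolynomial]
  split_ifs <;> simp

lemma IsHomogeneous.eq_sum_pderiv_mul_X {n : ℕ} {l : MvPolynomial (Fin n) (ZMod 2)}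
    (hl : l.IsHomogeneous 1) : l = ∑ j, X j * pderiv j l := by
  rw [hl.sum_X_mul_pderiv, one_smul]

/-- Partial derivatives of linear forms are constants of `F₂`. -/
lemma pderiv_linear {n : ℕ} {l : MvPolynomial (Fin n) (ZMod 2)}
    (hl : l.IsHomogeneous 1) (j : Fin n) : pderiv j l = 0 ∨ pderiv j l = 1 := by
  have h : (pderiv j l).IsHomogeneous 0 := hl.pderiv
  rw [← totalDegree_zero_iff_isHomogeneous, totalDegree_eq_zero_iff_eq_C] at h
  generalize coeff 0 (pderiv j l) = c at h
  rw [h]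
  fin_cases c
  · left; exact C_0
  · right; exact C_1

lemma milnorQ_linear {n : ℕ} (i : ℕ) {l : MvPolynomial (Fin n) (ZMod 2)}
    (hl : l.IsHomogeneous 1) : milnorQ n i l = l ^ 2 ^ (i + 1) := by
  rw [IsHomogeneous.eq_sum_pderiv_mul_X hl, map_sum, sum_pow_char_pow]
  refine Finset.sum_congr rfl fun j _ => ?_
  rcases pderiv_linear hl j with h | h <;> rw [h]
  · simp
  · rw [mul_one, milnorQ_X]

lemma pderiv_milnorQ {n : ℕ} (i : ℕ) (k : Fin n) {q : MvPolynomial (Fin n) (ZMod 2)}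
    (hq : q.IsHomogeneous 2) :
    pderiv k (milnorQ n i q) = (pderiv k q) ^ 2 ^ (i + 1) := by
  rw [pderiv_milnorQ_comm, milnorQ_linear i hq.pderiv]

/-- All exponents occurring in `q` are even, and over `F₂` every coefficient is its own square
root. -/
lemma exists_sq_of_pderiv_eq_zero {n : ℕ} {q : MvPolynomial (Fin n) (ZMod 2)}
    (hq : q.IsHomogeneous 2) (h : ∀ k, pderiv k q = 0) :
    ∃ a : MvPolynomial (Fin n) (ZMod 2), a.IsHomogeneous 1 ∧ q = a * a := by
  have key : ∀ d ∈ q.support, ∃ d' : Fin n →₀ ℕ, d = 2 • d' := by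
    intro d hd
    have hev : ∀ i, 2 ∣ d i := by
      intro i
      by_contra hi
      have hle : Finsupp.single i 1 ≤ d := by
        rw [Finsupp.single_le_iff]; omega
      have h1 := coeff_pderiv (i := i) q (d - Finsupp.single i 1)
      rw [h i, coeff_zero, tsub_add_cancel_of_le hle] at h1
      have h2 : (((d - Finsupp.single i 1 : Fin n →₀ ℕ) i : ℕ) : ZMod 2) + 1 = ((d i : ℕ) : ZMod 2) := by
        rw [Finsupp.tsub_apply, Finsupp.single_eq_same]
        rw [← Nat.cast_succ]; congr 1; omega
      rw [h2] at h1
      rcases mul_eq_zero.mp h1.symm with h3 | h3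
      · exact (mem_support_iff.mp hd) h3
      · exact hi ((ZMod.natCast_eq_zero_iff _ _).mp h3)
    refine ⟨d.mapRange (· / 2) rfl, ?_⟩
    ext i
    have := hev i
    simp only [Finsupp.smul_apply, Finsupp.mapRange_apply, smul_eq_mul]
    omega
  choose! g hg using key
  refine ⟨∑ d ∈ q.support, monomial (g d) (coeff d q), ?_, ?_⟩
  · refine IsHomogeneous.sum _ _ _ fun d hd => isHomogeneous_monomial _ ?_
    have h1 := hq.degree_eq_sum_deg_support hd
    have h2 : d.degree = 2 * (g d).degree := by
      conv_lhs => rw [hg d hd]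
      rw [map_nsmul, smul_eq_mul]
    change 2 = d.degree at h1
    omega
  · rw [← sq, sum_pow_char 2]
    conv_lhs => rw [q.as_sum]
    refine Finset.sum_congr rfl fun d hd => ?_
    rw [monomial_pow, ZMod.pow_card, ← hg d hd]

lemma exists_pderiv_pderiv_eq_one {n : ℕ} {q : MvPolynomial (Fin n) (ZMod 2)}
    (hq : q.IsHomogeneous 2) {k : Fin n} (hk : pderiv k q ≠ 0) :
    ∃ j, pderiv j (pderiv k q) = 1 := by
  have hu : (pderiv k q).IsHomogeneous 1 := hq.pderiv
  by_contra! hj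
  apply hk
  rw [IsHomogeneous.eq_sum_pderiv_mul_X hu]
  refine Finset.sum_eq_zero fun j _ => ?_
  rw [(pderiv_linear hu j).resolve_right (hj j), mul_zero]

lemma eq_of_d2_eq_zero {n : ℕ} {q : MvPolynomial (Fin n) (ZMod 2)}
    (hq : q.IsHomogeneous 2) (h : q * milnorQ n 0 q + milnorQ n 1 q = 0)
    {j k : Fin n} (hjk : pderiv j (pderiv k q) = 1) :
    q = (pderiv k q) ^ 2 + pderiv k q * pderiv j q + (pderiv j q) ^ 2 := by
  have h2 := two_eq_zero_mvPolynomial (n := n)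
  have e0 : ∀ i, pderiv i (milnorQ n 0 q) = (pderiv i q) ^ 2 := fun i => pderiv_milnorQ 0 i hq
  have e1 : ∀ i, pderiv i (milnorQ n 1 q) = (pderiv i q) ^ 4 := fun i => pderiv_milnorQ 1 i hq
  have hu0 : pderiv k q ≠ 0 := by
    intro h0
    rw [h0, map_zero] at hjk
    exact zero_ne_one hjk
  have A := congrArg (pderiv k) h
  simp only [map_add, map_zero, pderiv_mul, e0, e1] at A
  have B : milnorQ n 0 q + q * pderiv k q + (pderiv k q) ^ 3 = 0 := by
    refine (mul_eq_zero.mp ?_).resolve_left hu0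
    linear_combination A
  have C := congrArg (pderiv j) B
  simp only [map_add, map_zero, pderiv_mul, pderiv_pow, e0, hjk] at C
  push_cast at C
  linear_combination C - ((pderiv k q) ^ 2 * 2 + (pderiv j q) ^ 2
    + pderiv k q * pderiv j q) * h2

lemma eq_mul_of_h2_eq_zero {n : ℕ} {q : MvPolynomial (Fin n) (ZMod 2)}
    (hq : q.IsHomogeneous 2)
    (h : q ^ 2 * milnorQ n 1 q + (milnorQ n 0 q) ^ 3 + q ^ 3 * milnorQ n 0 q = 0)
    {j k : Fin n} (hjk : pderiv j (pderiv k q) = 1) :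
    ∃ a b : MvPolynomial (Fin n) (ZMod 2), a.IsHomogeneous 1 ∧ b.IsHomogeneous 1 ∧
      q = a * b := by
  have h2 := two_eq_zero_mvPolynomial (n := n)
  have e0 : ∀ i, pderiv i (milnorQ n 0 q) = (pderiv i q) ^ 2 := fun i => pderiv_milnorQ 0 i hq
  have e1 : ∀ i, pderiv i (milnorQ n 1 q) = (pderiv i q) ^ 4 := fun i => pderiv_milnorQ 1 i hq
  have hu : (pderiv k q).IsHomogeneous 1 := hq.pderiv
  have hv : (pderiv j q).IsHomogeneous 1 := hq.pderiv
  have hu0 : pderiv k q ≠ 0 := by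
    intro h0
    rw [h0, map_zero] at hjk
    exact zero_ne_one hjk
  have hq0 : q ≠ 0 := by
    rintro rfl
    exact hu0 (map_zero _)
  have A := congrArg (pderiv k) h
  simp only [map_add, map_zero, pderiv_mul, pderiv_pow, e0, e1] at A
  push_cast at A
  have B : q ^ 2 * (pderiv k q) ^ 3 + (milnorQ n 0 q) ^ 2 * pderiv k q
      + q ^ 2 * milnorQ n 0 q + q ^ 3 * pderiv k q = 0 := by
    refine (mul_eq_zero.mp ?_).resolve_left hu0
    linear_combination A - (q * pderiv k q * milnorQ n 1 q
      + (milnorQ n 0 q) ^ 2 * (pderiv k q) ^ 2 + q ^ 2 * pderiv k q * milnorQ n 0 q) * h2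
  have C := congrArg (pderiv j) B
  simp only [map_add, map_zero, pderiv_mul, pderiv_pow, e0, hjk] at C
  have D0uv := milnorQ_linear 0 hu
  have D0vv := milnorQ_linear 0 hv
  push_cast at C
  simp only [zero_add, pow_one] at D0uv D0vv
  set u := pderiv k q
  set v := pderiv j q
  set d := milnorQ n 0 q with hd
  have D : d ^ 2 = q ^ 2 * (q + u ^ 2 + u * v + v ^ 2) := by
    clear_value u v d
    clear A B e0 e1 hd h
    grind
  obtain ⟨l, hl⟩ : q ∣ d :=
    (IsIntegrallyClosed.pow_dvd_pow_iff two_ne_zero).mp ⟨_, D⟩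
  have hl2 : l ^ 2 = q + u ^ 2 + u * v + v ^ 2 := by
    refine mul_left_cancel₀ (pow_ne_zero 2 hq0) ?_
    rw [← D, hl]; ring
  have hqa : q = (l + u + v) ^ 2 + u * v := by
    clear_value u v
    grind
  have hd' : d = u * v * (u + v) := by
    have h3 := congrArg (milnorQ n 0) hqa
    simp only [map_add, Derivation.leibniz, Derivation.leibniz_pow, D0uv, D0vv, smul_eq_mul,
      nsmul_eq_mul] at h3
    push_cast at h3
    rw [← hd] at h3
    rw [h3, h2]; ring
  have hcub : (l + u + v) * ((l + v) * (l + u)) = 0 := by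
    have h4 : u * v * (u + v) = ((l + u + v) ^ 2 + u * v) * l := by
      rw [← hqa, ← hl, hd']
    clear_value u v d
    grind
  rcases mul_eq_zero.mp hcub with h5 | h5
  · exact ⟨u, v, hu, hv, by rw [hqa, h5]; ring⟩
  rcases mul_eq_zero.mp h5 with h5 | h5
  · refine ⟨u, u + v, hu, hu.add hv, ?_⟩
    rw [hqa]
    clear_value u v d
    grind
  · refine ⟨v, u + v, hv, hu.add hv, ?_⟩
    rw [hqa]
    clear_value u v d
    grind

theorem kernel_of_alpha_d2_h2 {n : ℕ}
    (q : MvPolynomial (Fin n) (ZMod 2)) (hq : q.IsHomogeneous 2)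
    (e : ℕ) (s : Finset ℕ) (f : ℕ → ℕ) :
    q ^ e * (∏ i ∈ s, (milnorQ n i q) ^ f i) *
        (q * milnorQ n 0 q + milnorQ n 1 q) *
        (q ^ 2 * milnorQ n 1 q + (milnorQ n 0 q) ^ 3 + q ^ 3 * milnorQ n 0 q) = 0 ↔
      ((∃ a b : MvPolynomial (Fin n) (ZMod 2), a.IsHomogeneous 1 ∧ b.IsHomogeneous 1 ∧
          q = a ^ 2 + a * b + b ^ 2) ∨
        (∃ a b : MvPolynomial (Fin n) (ZMod 2), a.IsHomogeneous 1 ∧ b.IsHomogeneous 1 ∧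
          q = a * b)) := by
  have h2 := two_eq_zero_mvPolynomial (n := n)
  constructor
  · intro h
    by_cases hall : ∀ k, pderiv k q = 0
    · obtain ⟨a, ha, hqa⟩ := exists_sq_of_pderiv_eq_zero hq hall
      exact Or.inr ⟨a, a, ha, ha, hqa⟩
    · push Not at hall
      obtain ⟨k, hk⟩ := hall
      obtain ⟨j, hjk⟩ := exists_pderiv_pderiv_eq_one hq hk
      rcases mul_eq_zero.mp h with h | h
      · rcases mul_eq_zero.mp h with h | h
        -- A nonzero derivative forces `q` and all `D_i q` to be nonzero.
        · exfalso
          rcases mul_eq_zero.mp h with h | h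
          · exact hk (by rw [eq_zero_of_pow_eq_zero h, map_zero])
          · obtain ⟨i, -, hi⟩ := Finset.prod_eq_zero_iff.mp h
            have h3 := pderiv_milnorQ i k hq
            rw [eq_zero_of_pow_eq_zero hi, map_zero] at h3
            exact hk (eq_zero_of_pow_eq_zero h3.symm)
        · exact Or.inl ⟨_, _, hq.pderiv, hq.pderiv, eq_of_d2_eq_zero hq h hjk⟩
      · exact Or.inr (eq_mul_of_h2_eq_zero hq h hjk)
  · rintro (⟨a, b, ha, hb, rfl⟩ | ⟨a, b, ha, hb, rfl⟩)
    all_goals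
      have a0 := milnorQ_linear 0 ha
      have a1 := milnorQ_linear 1 ha
      have b0 := milnorQ_linear 0 hb
      have b1 := milnorQ_linear 1 hb
      norm_num only at a0 a1 b0 b1
    · have hz : (a ^ 2 + a * b + b ^ 2) * milnorQ n 0 (a ^ 2 + a * b + b ^ 2)
          + milnorQ n 1 (a ^ 2 + a * b + b ^ 2) = 0 := by
        simp only [map_add, Derivation.leibniz, Derivation.leibniz_pow, smul_eq_mul,
          nsmul_eq_mul, a0, a1, b0, b1]
        push_cast
        grind
      rw [hz, mul_zero, zero_mul]
    · have hz : (a * b) ^ 2 * milnorQ n 1 (a * b) + (milnorQ n 0 (a * b)) ^ 3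
          + (a * b) ^ 3 * milnorQ n 0 (a * b) = 0 := by
        simp only [Derivation.leibniz, smul_eq_mul, a0, a1, b0, b1]
        grind
      rw [hz, mul_zero]
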